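/- Let G = (V,E,ε) be a multigraph, let d = {u,v} be an unordered pair of distinct vertices with ε^{-1}(d) nonempty, and set |e| = |ε^{-1}(d)| (the multiplicity of the multiedge). Suppose u and v are connected in the deletion G∖e (i.e., u and v lie in the same connected component of the graph (V, ε(E∖ε^{-1}(d))))—so the multiedge is neither a loop nor a coloop of the underlying graph. Then T(G;x,y) = T(G∖e;x,y) + ( Σ_{i=0}^{|e|−1} y^i ) · T(G/e;x,y). -/

import Mathlib

/-!
Write a set of edges of `G` as `B ∪ C`, with `B` a set of edges parallel to `{u, v}` and `C` a set
of edges of `G∖e`. The sets with `B = ∅` contribute `T(G∖e)`, since deleting edges between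
connected vertices does not change the rank. If `B ≠ ∅`, then `B ∪ C` connects `u` to `v`, so
gluing `u` to `v` preserves its number of components but removes a vertex: its rank is one more
than that of `C` in `G/e`, and it contributes `(y - 1) ^ (|B| - 1)` times the term of `C` in
`T(G/e)`. Summing over `B ≠ ∅` gives `((1 + (y - 1)) ^ |e| - 1) / (y - 1) = ∑_{i < |e|} y ^ i`.

Numbers of components are compared through functions on the vertices that are constant along the
edges of `A`: such a function factors through the components of `A`, so a surjective one has at
most `κ(A)` values.
-/

open scoped Classical

noncomputable section

/-- A multigraph is encoded by a map `ε : E → Sym2 V` assigning to each edge index its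
unordered pair of endpoints.  `graphOf ε A` is the simple graph on `V` whose edges are the
endpoint pairs of the edges in `A`. -/
def graphOf {V E : Type*} (ε : E → Sym2 V) (A : Set E) : SimpleGraph V :=
  SimpleGraph.fromEdgeSet (ε '' A)

/-- Number of connected components of the graph `(V, ε(A))` (isolated vertices count). -/
def kappa {V E : Type*} (ε : E → Sym2 V) (A : Set E) : ℕ :=
  Nat.card (graphOf ε A).ConnectedComponent

/-- Rank function `r(A) = |V| − κ(A)`. -/
def rk {V E : Type*} (ε : E → Sym2 V) (A : Set E) : ℕ :=
  Nat.card V - kappa ε A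

/-- Tutte polynomial of a multigraph, evaluated at `(x, y) ∈ ℂ²`:
`T(G;x,y) = Σ_{A ⊆ E} (x−1)^{r(E)−r(A)} (y−1)^{|A|−r(A)}`. -/
def tutte {V E : Type*} (ε : E → Sym2 V) (x y : ℂ) : ℂ :=
  ∑ᶠ A : Set E,
    (x - 1) ^ (rk ε Set.univ - rk ε A) * (y - 1) ^ (A.ncard - rk ε A)

/-- The edge index set of the deletion `G∖e` of the multiedge with endpoints `{u,v}`. -/
def delEdges {V E : Type*} (ε : E → Sym2 V) (u v : V) : Type _ :=
  {e : E // ε e ≠ s(u, v)}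

/-- The endpoint map of the deletion `G∖e`. -/
def delEps {V E : Type*} (ε : E → Sym2 V) (u v : V) : delEdges ε u v → Sym2 V :=
  fun e => ε e.1

/-- The endpoint map of the contraction `G/e`: the edges are those of the deletion, and the
vertex set is the quotient of `V` identifying `u` and `v`. -/
def conEps {V E : Type*} (ε : E → Sym2 V) (u v : V) :
    delEdges ε u v → Sym2 (Quot fun a b => a = u ∧ b = v) :=
  fun e => (ε e.1).map (Quot.mk fun a b => a = u ∧ b = v)

section Components

variable {V W E F : Type*} {ε : E → Sym2 V} {A B : Set E}

theorem eq_of_reachable_graphOf {f : V → W} (hf : ∀ e ∈ A, ((ε e).map f).IsDiag) {a b : V}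
    (h : (graphOf ε A).Reachable a b) : f a = f b := by
  obtain ⟨p⟩ := h
  induction p with
  | nil => rfl
  | cons hadj _ ih =>
    obtain ⟨⟨e, he, hends⟩, -⟩ := (SimpleGraph.fromEdgeSet_adj _).1 hadj
    have hdiag := hf e he
    rw [hends, Sym2.map_mk, Sym2.mk_isDiag_iff] at hdiag
    exact hdiag.trans ih

theorem reachable_graphOf_of_mem {e : E} (he : e ∈ A) {a b : V} (hends : ε e = s(a, b)) :
    (graphOf ε A).Reachable a b := by
  by_cases hab : a = b
  · exact hab ▸ SimpleGraph.Reachable.refl a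
  · exact SimpleGraph.Adj.reachable ((SimpleGraph.fromEdgeSet_adj _).2 ⟨⟨e, he, hends⟩, hab⟩)

theorem isDiag_map_connectedComponentMk {e : E} (he : e ∈ A) :
    ((ε e).map (graphOf ε A).connectedComponentMk).IsDiag := by
  induction hends : ε e with
  | _ a b => exact SimpleGraph.ConnectedComponent.sound (reachable_graphOf_of_mem he hends)

theorem surjective_connectedComponentMk (G : SimpleGraph V) :
    Function.Surjective G.connectedComponentMk :=
  Quot.mk_surjective

theorem card_le_kappa [Finite V] {f : V → W} (hsurj : Function.Surjective f)
    (hf : ∀ e ∈ A, ((ε e).map f).IsDiag) : Nat.card W ≤ kappa ε A :=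
  Nat.card_le_card_of_surjective
    (SimpleGraph.ConnectedComponent.lift f fun _ _ p _ => eq_of_reachable_graphOf hf p.reachable)
    (Function.Surjective.of_comp (g := (graphOf ε A).connectedComponentMk) hsurj)

theorem kappa_le_card [Finite V] (ε : E → Sym2 V) (A : Set E) : kappa ε A ≤ Nat.card V :=
  Nat.card_le_card_of_surjective _ (surjective_connectedComponentMk _)

theorem kappa_empty [Finite V] (ε : E → Sym2 V) : kappa ε ∅ = Nat.card V :=
  (kappa_le_card ε ∅).antisymm (card_le_kappa Function.surjective_id (by simp))

theorem kappa_comp (ε : E → Sym2 V) (i : F → E) (C : Set F) :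
    kappa (ε ∘ i) C = kappa ε (i '' C) := by
  simp only [kappa, graphOf, Set.image_comp]

theorem kappa_union_eq_right [Finite V]
    (hB : ∀ e ∈ B, ((ε e).map (graphOf ε A).connectedComponentMk).IsDiag) :
    kappa ε (B ∪ A) = kappa ε A := by
  refine le_antisymm (card_le_kappa (surjective_connectedComponentMk _) fun e he => ?_)
    (card_le_kappa (surjective_connectedComponentMk _) fun e he => ?_)
  · exact isDiag_map_connectedComponentMk (Or.inr he)
  · exact he.elim (hB e) isDiag_map_connectedComponentMk

theorem kappa_map [Finite V] {π : V → W} (hπ : Function.Surjective π)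
    (hfib : ∀ a b, π a = π b → (graphOf ε A).Reachable a b) :
    kappa (Sym2.map π ∘ ε) A = kappa ε A := by
  have := Finite.of_surjective π hπ
  refine le_antisymm ?_ ?_
  · refine card_le_kappa ((surjective_connectedComponentMk _).comp hπ) fun e he => ?_
    rw [← Sym2.map_map]
    exact isDiag_map_connectedComponentMk he
  · let g : W → (graphOf ε A).ConnectedComponent :=
      (graphOf ε A).connectedComponentMk ∘ Function.surjInv hπ
    have hg : g ∘ π = (graphOf ε A).connectedComponentMk := funext fun a =>
      SimpleGraph.ConnectedComponent.sound (hfib _ _ (Function.surjInv_eq hπ (π a)))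
    have hgsurj : Function.Surjective g :=
      Function.Surjective.of_comp (hg ▸ surjective_connectedComponentMk _)
    refine card_le_kappa hgsurj fun e he => ?_
    rw [Function.comp_apply, Sym2.map_map, hg]
    exact isDiag_map_connectedComponentMk he

end Components

section Rank

variable {V E : Type*}

/-- The type `V` with the points `u` and `v` identified; this is the vertex set of the contraction
of the multiedge `{u, v}`. -/
abbrev Glued (u v : V) : Type _ :=
  Quot fun a b : V => a = u ∧ b = v

theorem Glued.card_le [Finite V] (u v : V) : Nat.card V ≤ Nat.card (Glued u v) + 1 := by
  let unglue : Option (Glued u v) → V := fun o =>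
    o.elim v (Quot.lift (fun w => if w = v then u else w) (by rintro a b ⟨rfl, rfl⟩; simp))
  have hunglue : Function.Surjective unglue := fun w => by
    by_cases hw : w = v
    · exact ⟨none, hw.symm⟩
    · exact ⟨some (Quot.mk _ w), if_neg hw⟩
  simpa only [Finite.card_option] using Nat.card_le_card_of_surjective unglue hunglue

theorem Glued.card_add_one [Finite V] {u v : V} (huv : u ≠ v) :
    Nat.card (Glued u v) + 1 = Nat.card V := by
  have hlt : Nat.card (Glued u v) < Nat.card V := by
    have := Fintype.ofFinite V
    have := Fintype.ofFinite (Glued u v)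
    simp only [Nat.card_eq_fintype_card]
    exact Fintype.card_lt_of_surjective_not_injective (Quot.mk _) Quot.mk_surjective
      fun hinj => huv (hinj (Quot.sound ⟨rfl, rfl⟩))
  exact le_antisymm hlt (Glued.card_le u v)

theorem kappa_le_kappa_insert_add_one [Finite V] (ε : E → Sym2 V) (e : E) (A : Set E) :
    kappa ε A ≤ kappa ε (insert e A) + 1 := by
  induction hends : ε e with
  | _ a b =>
    let mk := (graphOf ε A).connectedComponentMk
    let glue : V → Glued (mk a) (mk b) := Quot.mk _ ∘ mk
    have hglue : ∀ e' ∈ insert e A, ((ε e').map glue).IsDiag := by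
      rintro e' (rfl | he')
      · rw [hends]
        exact Quot.sound ⟨rfl, rfl⟩
      · rw [← Sym2.map_map]
        exact (isDiag_map_connectedComponentMk he').map
    calc kappa ε A ≤ Nat.card (Glued (mk a) (mk b)) + 1 := Glued.card_le _ _
      _ ≤ kappa ε (insert e A) + 1 := by
        gcongr
        exact card_le_kappa (Quot.mk_surjective.comp (surjective_connectedComponentMk _)) hglue

theorem rk_le_ncard [Finite V] (ε : E → Sym2 V) {A : Set E} (hA : A.Finite) :
    rk ε A ≤ A.ncard := by
  suffices Nat.card V ≤ A.ncard + kappa ε A from Nat.sub_le_of_le_add this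
  induction A, hA using Set.Finite.induction_on with
  | empty => rw [kappa_empty, Set.ncard_empty, zero_add]
  | @insert e A he hA ih =>
    rw [Set.ncard_insert_of_notMem he hA]
    have := kappa_le_kappa_insert_add_one ε e A
    omega

end Rank

section SetSums

variable {E : Type*}

/-- A set amounts to a set of elements satisfying `p` together with a set of elements not
satisfying `p`; it splits the sets of edges of `G` along the multiedge `{u, v}`. -/
def setProdEquivSet (p : E → Prop) : Set {e // p e} × Set {e // ¬p e} ≃ Set E where
  toFun P := Subtype.val '' P.1 ∪ Subtype.val '' P.2
  invFun A := (Subtype.val ⁻¹' A, Subtype.val ⁻¹' A)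
  left_inv P := by ext ⟨e, he⟩ <;> simp [he]
  right_inv A := by ext e; by_cases he : p e <;> simp [he]

theorem sum_set_eq_add_sum_nonempty {M : Type*} [AddCommMonoid M] [Fintype E] (f : Set E → M) :
    ∑ B, f B = f ∅ + ∑ B with B.Nonempty, f B := by
  rw [Fintype.sum_eq_add_sum_compl ∅]
  congr 2
  ext B
  simp [Set.nonempty_iff_ne_empty]

theorem sum_pow_ncard_sub_one {R : Type*} [CommSemiring R] [Fintype E] (t : R) :
    ∑ B : Set E with B.Nonempty, t ^ (B.ncard - 1) =
      ∑ i ∈ Finset.range (Nat.card E), (t + 1) ^ i := by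
  let f : ℕ → R := fun m => if m = 0 then 0 else t ^ (m - 1)
  calc ∑ B : Set E with B.Nonempty, t ^ (B.ncard - 1)
      = ∑ B ∈ (Finset.univ : Finset E).powerset, f B.card := by
        rw [Finset.sum_filter, Finset.powerset_univ, ← Fintype.finsetEquivSet.sum_comp]
        refine Finset.sum_congr rfl fun B _ => ?_
        simp [f, Finset.nonempty_iff_ne_empty, ite_not]
    _ = ∑ m ∈ Finset.range (Nat.card E), (Nat.card E).choose (m + 1) * t ^ m := by
        rw [Finset.sum_powerset_apply_card, Finset.sum_range_succ']
        simp [f, Nat.card_eq_fintype_card]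
    _ = ∑ i ∈ Finset.range (Nat.card E), (t + 1) ^ i := by
        simpa [Polynomial.eval_finsetSum] using congrArg (Polynomial.eval t)
          (Polynomial.geom_sum_X_comp_X_add_one_eq_sum (R := R) (Nat.card E)).symm

end SetSums

section DeletionContraction

variable {V E : Type*} {ε : E → Sym2 V} {u v : V}

/-- The contribution of the edge set `A` to the Tutte polynomial. -/
def tutteTerm (ε : E → Sym2 V) (x y : ℂ) (A : Set E) : ℂ :=
  (x - 1) ^ (rk ε Set.univ - rk ε A) * (y - 1) ^ (A.ncard - rk ε A)

theorem tutte_eq_sum [Fintype E] (ε : E → Sym2 V) (x y : ℂ) :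
    tutte ε x y = ∑ A, tutteTerm ε x y A :=
  finsum_eq_sum_of_fintype _

instance [Finite E] : Finite (delEdges ε u v) :=
  inferInstanceAs (Finite {e // ε e ≠ s(u, v)})

instance [Fintype E] : Fintype (delEdges ε u v) :=
  inferInstanceAs (Fintype {e // ¬ε e = s(u, v)})

/-- The inclusion of the edges of the deletion in the edges of the multigraph. -/
def delEdges.incl : delEdges ε u v → E :=
  Subtype.val

theorem delEdges.incl_injective : Function.Injective (delEdges.incl (ε := ε) (u := u) (v := v)) :=
  Subtype.val_injective

theorem delEdges.range_incl :
    Set.range (delEdges.incl (ε := ε) (u := u) (v := v)) = {e | ε e = s(u, v)}ᶜ :=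
  Subtype.range_val

theorem setOf_union_image_incl_univ (ε : E → Sym2 V) (u v : V) :
    {e | ε e = s(u, v)} ∪ delEdges.incl '' (Set.univ : Set (delEdges ε u v)) = Set.univ := by
  rw [Set.image_univ, delEdges.range_incl, Set.union_compl_self]

theorem rk_delEps (C : Set (delEdges ε u v)) : rk (delEps ε u v) C = rk ε (delEdges.incl '' C) :=
  congrArg (Nat.card V - ·) (kappa_comp ε delEdges.incl C)

theorem rk_delEps_univ [Finite V] (hconn : (graphOf (delEps ε u v) Set.univ).Reachable u v) :
    rk (delEps ε u v) Set.univ = rk ε Set.univ := by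
  have hgraph : graphOf (delEps ε u v) Set.univ = graphOf ε (delEdges.incl '' Set.univ) :=
    congrArg SimpleGraph.fromEdgeSet (Set.image_comp ε delEdges.incl Set.univ)
  rw [rk_delEps, ← setOf_union_image_incl_univ ε u v, rk, rk,
    kappa_union_eq_right]
  intro e he
  rw [show ε e = s(u, v) from he, ← hgraph]
  exact SimpleGraph.ConnectedComponent.sound hconn

theorem kappa_conEps [Finite V] {B : Set E} (hB : B.Nonempty) (hBuv : ∀ e ∈ B, ε e = s(u, v))
    (C : Set (delEdges ε u v)) :
    kappa (conEps ε u v) C = kappa ε (B ∪ delEdges.incl '' C) := by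
  set G := graphOf ε (B ∪ delEdges.incl '' C)
  have hreach : G.Reachable u v := by
    obtain ⟨e, he⟩ := hB
    exact reachable_graphOf_of_mem (Set.mem_union_left _ he) (hBuv e he)
  let π : V → Glued u v := Quot.mk _
  let component : Glued u v → G.ConnectedComponent := Quot.lift G.connectedComponentMk
    (by rintro a b ⟨rfl, rfl⟩; exact SimpleGraph.ConnectedComponent.sound hreach)
  calc kappa (conEps ε u v) C
      = kappa (Sym2.map π ∘ ε) (delEdges.incl '' C) :=
        kappa_comp (Sym2.map π ∘ ε) delEdges.incl C
    _ = kappa (Sym2.map π ∘ ε) (B ∪ delEdges.incl '' C) := by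
        refine (kappa_union_eq_right fun e he => Sym2.IsDiag.map ?_).symm
        rw [Function.comp_apply, hBuv e he]
        exact Quot.sound ⟨rfl, rfl⟩
    _ = kappa ε (B ∪ delEdges.incl '' C) :=
        kappa_map Quot.mk_surjective fun a b hab =>
          SimpleGraph.ConnectedComponent.exact (congrArg component hab)

theorem rk_union_eq_rk_conEps_add_one [Finite V] (huv : u ≠ v) {B : Set E} (hB : B.Nonempty)
    (hBuv : ∀ e ∈ B, ε e = s(u, v)) (C : Set (delEdges ε u v)) :
    rk ε (B ∪ delEdges.incl '' C) = rk (conEps ε u v) C + 1 := by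
  have hle : kappa (conEps ε u v) C ≤ Nat.card (Glued u v) := kappa_le_card _ _
  rw [rk, rk, ← kappa_conEps hB hBuv, ← Glued.card_add_one huv, Nat.sub_add_comm hle]

theorem rk_univ_eq_rk_conEps_univ_add_one [Finite V] (huv : u ≠ v)
    (hne : {e | ε e = s(u, v)}.Nonempty) :
    rk ε Set.univ = rk (conEps ε u v) Set.univ + 1 := by
  rw [← setOf_union_image_incl_univ ε u v]
  exact rk_union_eq_rk_conEps_add_one huv hne (fun _ he => he) Set.univ

theorem tutteTerm_image_incl [Finite V]
    (hconn : (graphOf (delEps ε u v) Set.univ).Reachable u v) (x y : ℂ)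
    (C : Set (delEdges ε u v)) :
    tutteTerm ε x y (delEdges.incl '' C) = tutteTerm (delEps ε u v) x y C := by
  rw [tutteTerm, tutteTerm, rk_delEps_univ hconn, rk_delEps,
    Set.ncard_image_of_injective C delEdges.incl_injective]

theorem ncard_union_image_incl [Finite E] {B : Set E} (hBuv : ∀ e ∈ B, ε e = s(u, v))
    (C : Set (delEdges ε u v)) :
    (B ∪ delEdges.incl '' C).ncard = B.ncard + C.ncard := by
  have hdisj : Disjoint B (delEdges.incl '' C) := by
    rw [Set.disjoint_right]
    rintro _ ⟨e, -, rfl⟩ he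
    exact e.2 (hBuv _ he)
  rw [Set.ncard_union_eq hdisj, Set.ncard_image_of_injective C delEdges.incl_injective]

theorem tutteTerm_union_image_incl [Finite V] [Finite E] (huv : u ≠ v) {B : Set E}
    (hB : B.Nonempty) (hBuv : ∀ e ∈ B, ε e = s(u, v)) (x y : ℂ) (C : Set (delEdges ε u v)) :
    tutteTerm ε x y (B ∪ delEdges.incl '' C) =
      (y - 1) ^ (B.ncard - 1) * tutteTerm (conEps ε u v) x y C := by
  have hpos : 0 < B.ncard := (Set.ncard_pos B.toFinite).2 hB
  have hle : rk (conEps ε u v) C ≤ C.ncard := rk_le_ncard _ C.toFinite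
  have hnullity : B.ncard + C.ncard - (rk (conEps ε u v) C + 1) =
      (B.ncard - 1) + (C.ncard - rk (conEps ε u v) C) := by omega
  rw [tutteTerm, tutteTerm, rk_univ_eq_rk_conEps_univ_add_one huv (hB.mono hBuv),
    rk_union_eq_rk_conEps_add_one huv hB hBuv, ncard_union_image_incl hBuv, hnullity, pow_add,
    Nat.add_sub_add_right]
  ring

theorem tutte_eq_sum_image_incl_add [Fintype E] (ε : E → Sym2 V) (u v : V) (x y : ℂ) :
    tutte ε x y = ∑ C : Set (delEdges ε u v), tutteTerm ε x y (delEdges.incl '' C) +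
      ∑ B : Set {e // ε e = s(u, v)} with B.Nonempty, ∑ C : Set (delEdges ε u v),
        tutteTerm ε x y (Subtype.val '' B ∪ delEdges.incl '' C) := by
  have hprod : tutte ε x y = ∑ B : Set {e // ε e = s(u, v)}, ∑ C : Set (delEdges ε u v),
      tutteTerm ε x y (Subtype.val '' B ∪ delEdges.incl '' C) := by
    rw [tutte_eq_sum, ← (setProdEquivSet fun e => ε e = s(u, v)).sum_comp,
      Fintype.sum_prod_type]
    rfl
  rw [hprod, sum_set_eq_add_sum_nonempty]
  simp only [Set.image_empty, Set.empty_union]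

theorem sum_tutteTerm_image_incl [Finite V] [Fintype E]
    (hconn : (graphOf (delEps ε u v) Set.univ).Reachable u v) (x y : ℂ) :
    ∑ C : Set (delEdges ε u v), tutteTerm ε x y (delEdges.incl '' C) =
      tutte (delEps ε u v) x y := by
  simp only [tutte_eq_sum, tutteTerm_image_incl hconn]

theorem sum_nonempty_tutteTerm_union_image_incl [Finite V] [Fintype E]
    (huv : u ≠ v) (x y : ℂ) :
    ∑ B : Set {e // ε e = s(u, v)} with B.Nonempty, ∑ C : Set (delEdges ε u v),
        tutteTerm ε x y (Subtype.val '' B ∪ delEdges.incl '' C) =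
      (∑ i ∈ Finset.range {e | ε e = s(u, v)}.ncard, y ^ i) * tutte (conEps ε u v) x y := by
  have hterm (B : Set {e // ε e = s(u, v)}) (hB : B.Nonempty) (C : Set (delEdges ε u v)) :
      tutteTerm ε x y (Subtype.val '' B ∪ delEdges.incl '' C) =
        (y - 1) ^ (B.ncard - 1) * tutteTerm (conEps ε u v) x y C := by
    rw [tutteTerm_union_image_incl huv (hB.image _) (by rintro _ ⟨e, -, rfl⟩; exact e.2),
      Set.ncard_image_of_injective B Subtype.val_injective]
  have hgeom : ∑ B : Set {e // ε e = s(u, v)} with B.Nonempty, (y - 1) ^ (B.ncard - 1) =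
      ∑ i ∈ Finset.range {e | ε e = s(u, v)}.ncard, y ^ i := by
    rw [sum_pow_ncard_sub_one, sub_add_cancel]
    rfl
  rw [← hgeom, tutte_eq_sum, Finset.sum_mul_sum]
  exact Finset.sum_congr rfl fun B hB =>
    Finset.sum_congr rfl fun C _ => hterm B (Finset.mem_filter.1 hB).2 C

end DeletionContraction

/-- If `u ≠ v`, the multiedge `{u,v}` is present (nonempty preimage) with
multiplicity `|e|`, and `u` and `v` are still connected in the deletion `G∖e` (so the
multiedge is neither a loop nor a coloop), then
`T(G;x,y) = T(G∖e;x,y) + (Σ_{i=0}^{|e|−1} yⁱ) · T(G/e;x,y)`. -/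
theorem statement9 {V E : Type*} [Finite V] [Finite E] (ε : E → Sym2 V) (u v : V)
    (huv : u ≠ v) (hne : {e : E | ε e = s(u, v)}.Nonempty)
    (hconn : (graphOf (delEps ε u v) Set.univ).Reachable u v) (x y : ℂ) :
    tutte ε x y =
      tutte (delEps ε u v) x y +
        (∑ i ∈ Finset.range {e : E | ε e = s(u, v)}.ncard, y ^ i) *
          tutte (conEps ε u v) x y := by
  have := Fintype.ofFinite E
  rw [tutte_eq_sum_image_incl_add ε u v, sum_tutteTerm_image_incl hconn,
    sum_nonempty_tutteTerm_union_image_incl huv]
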